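/- Let $E$ be a Banach space (over the real or complex field) and $1<p<\infty$ with $1/p+1/p^*=1$. The identity operator $id_E:E\to E$ is Cohen strongly $p$-summing if and only if $E$ is finite-dimensional. -/

import Mathlib

open scoped BigOperators

/-- The weak `q`-norm of a finite family of continuous linear functionals on `E`. -/
noncomputable def weakNorm {𝕜 E : Type*} [RCLike 𝕜] [NormedAddCommGroup E] [NormedSpace 𝕜 E]
    {ι : Type*} [Fintype ι] (q : ℝ) (φ : ι → E →L[𝕜] 𝕜) : ℝ :=
  ⨆ y : Metric.closedBall (0 : E) 1, (∑ i, ‖φ i (y : E)‖ ^ q) ^ (1 / q)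

/-
Testing the Cohen inequality of `id` against almost norming vectors and using `ℓᵖ`-`ℓ^q` duality
shows that the identity of the dual is `q`-summing. Rescaling each `f` so that
`‖a • f‖ ^ q = ‖f‖ ^ 2` makes it `2`-summing, because `t ^ q ≤ ε + K * t ^ 2` on `[0, 1]` and the
`ε`-term can be absorbed. By Hahn–Banach there is then a mean `μ` on the bounded continuous
functions on the unit ball with `‖f‖ ^ 2 ≤ K * μ (f * f)` for all functionals `f`. If `v₁, …, vₙ`
are orthonormal for `μ (f * g)`, then `∑ vᵢ ^ 2 ≤ K` pointwise by Bessel, and applying `μ` gives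
`n ≤ K`.
-/

open BoundedContinuousFunction Metric Module

section Cohen

variable {𝕜 E F : Type*} [RCLike 𝕜] [NormedAddCommGroup E] [NormedSpace 𝕜 E]
  [NormedAddCommGroup F] [NormedSpace 𝕜 F] {ι : Type*} [Fintype ι] {p q C : ℝ}

lemma weakNorm_nonneg (q : ℝ) (φ : ι → E →L[𝕜] 𝕜) : 0 ≤ weakNorm q φ :=
  Real.iSup_nonneg fun _ ↦ by positivity

lemma weakNorm_le {φ : ι → E →L[𝕜] 𝕜} {M : ℝ}
    (h : ∀ y : closedBall (0 : E) 1, (∑ i, ‖φ i y‖ ^ q) ^ (1 / q) ≤ M) : weakNorm q φ ≤ M :=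
  have : Nonempty (closedBall (0 : E) 1) := ⟨0, by simp⟩
  ciSup_le h

lemma le_weakNorm (hq : 0 < q) (φ : ι → E →L[𝕜] 𝕜) {y : E} (hy : ‖y‖ ≤ 1) :
    (∑ i, ‖φ i y‖ ^ q) ^ (1 / q) ≤ weakNorm q φ := by
  refine le_ciSup (f := fun y : closedBall (0 : E) 1 ↦ (∑ i, ‖φ i y‖ ^ q) ^ (1 / q))
    ⟨(∑ i, ‖φ i‖ ^ q) ^ (1 / q), ?_⟩ ⟨y, mem_closedBall_zero_iff.2 hy⟩
  rintro _ ⟨z, rfl⟩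
  dsimp only
  gcongr with i
  exact (φ i).unit_le_opNorm z (mem_closedBall_zero_iff.1 z.2)

lemma le_weakNorm_mul_norm (hq : 0 < q) (φ : ι → E →L[𝕜] 𝕜) (y : E) :
    (∑ i, ‖φ i y‖ ^ q) ^ (1 / q) ≤ weakNorm q φ * ‖y‖ := by
  obtain rfl | hy := eq_or_ne y 0
  · simp [hq.ne']
  have hy' : ‖y‖ ≠ 0 := norm_ne_zero_iff.2 hy
  have hz : ‖(‖y‖⁻¹ : 𝕜) • y‖ = 1 := by simp [norm_smul, hy']
  have hφ (i : ι) : ‖φ i y‖ ^ q = ‖y‖ ^ q * ‖φ i ((‖y‖⁻¹ : 𝕜) • y)‖ ^ q := by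
    rw [← Real.mul_rpow (norm_nonneg _) (norm_nonneg _), map_smul, norm_smul]
    simp [hy']
  calc (∑ i, ‖φ i y‖ ^ q) ^ (1 / q)
      = ‖y‖ * (∑ i, ‖φ i ((‖y‖⁻¹ : 𝕜) • y)‖ ^ q) ^ (1 / q) := by
        simp_rw [hφ, ← Finset.mul_sum]
        rw [Real.mul_rpow (by positivity) (by positivity), one_div,
          Real.rpow_rpow_inv (norm_nonneg y) hq.ne']
    _ ≤ weakNorm q φ * ‖y‖ := by
        rw [mul_comm]
        gcongr
        exact le_weakNorm hq φ hz.le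

lemma norm_I_le_one : ‖(RCLike.I : 𝕜)‖ ≤ 1 := by
  rw [RCLike.norm_I]
  split_ifs <;> norm_num

lemma weakNorm_extendRCLike_le [NormedSpace ℝ E] [IsScalarTower ℝ 𝕜 E] (hq : 1 ≤ q)
    (f : ι → StrongDual ℝ E) :
    weakNorm q (fun i ↦ (f i).extendRCLike (𝕜 := 𝕜)) ≤ 2 * weakNorm q f := by
  have hq₀ : 0 < q := zero_lt_one.trans_le hq
  refine weakNorm_le fun ⟨y, hy⟩ ↦ ?_
  rw [mem_closedBall_zero_iff] at hy
  have hIy : ‖(RCLike.I : 𝕜) • y‖ ≤ 1 := by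
    rw [norm_smul]
    exact mul_le_one₀ norm_I_le_one (norm_nonneg y) hy
  calc (∑ i, ‖(f i).extendRCLike (𝕜 := 𝕜) y‖ ^ q) ^ (1 / q)
      ≤ (∑ i, (‖f i y‖ + ‖f i ((RCLike.I : 𝕜) • y)‖) ^ q) ^ (1 / q) := by
        gcongr with i
        rw [StrongDual.extendRCLike_apply]
        refine (norm_sub_le _ _).trans ?_
        rw [norm_mul, RCLike.norm_ofReal, RCLike.norm_ofReal, Real.norm_eq_abs, Real.norm_eq_abs]
        gcongr
        exact mul_le_of_le_one_left (abs_nonneg _) norm_I_le_one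
    _ ≤ (∑ i, ‖f i y‖ ^ q) ^ (1 / q) + (∑ i, ‖f i ((RCLike.I : 𝕜) • y)‖ ^ q) ^ (1 / q) :=
        Real.Lp_add_le_of_nonneg _ hq (fun _ _ ↦ norm_nonneg _) fun _ _ ↦ norm_nonneg _
    _ ≤ weakNorm q f + weakNorm q f :=
        add_le_add (le_weakNorm hq₀ f hy) (le_weakNorm hq₀ f hIy)
    _ = 2 * weakNorm q f := (two_mul _).symm

lemma exists_norm_le_one_mul_opNorm_le (T : E →L[𝕜] F) {t : ℝ} (ht : t < 1) :
    ∃ z, ‖z‖ ≤ 1 ∧ t * ‖T‖ ≤ ‖T z‖ := by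
  obtain hT | hT := (norm_nonneg T).eq_or_lt
  · exact ⟨0, by simp, by simp [← hT]⟩
  · obtain ⟨z, hz, hTz⟩ := T.exists_lt_apply_of_lt_opNorm (mul_lt_of_lt_one_left hT ht)
    exact ⟨z, hz.le, hTz.le⟩

variable (p q C) in
/-- The operator `T` is Cohen strongly `p`-summing with constant `C`; the exponent `q` is meant to
be the conjugate of `p`. -/
def CohenStronglySummingWith (T : E →L[𝕜] F) : Prop :=
  ∀ (m : ℕ) (x : Fin m → E) (φ : Fin m → F →L[𝕜] 𝕜),
    ∑ i, ‖φ i (T (x i))‖ ≤ C * (∑ i, ‖x i‖ ^ p) ^ (1 / p) * weakNorm q φ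

namespace CohenStronglySummingWith

lemma mono {C' : ℝ} {T : E →L[𝕜] F} (hT : CohenStronglySummingWith p q C T) (hC : C ≤ C') :
    CohenStronglySummingWith p q C' T := fun m x φ ↦
  (hT m x φ).trans <| by
    have := weakNorm_nonneg q φ
    gcongr

lemma sum {T : ι → E →L[𝕜] F} {C : ι → ℝ} (hT : ∀ j, CohenStronglySummingWith p q (C j) (T j)) :
    CohenStronglySummingWith p q (∑ j, C j) (∑ j, T j) := fun m x φ ↦
  calc ∑ i, ‖φ i ((∑ j, T j) (x i))‖
      ≤ ∑ i, ∑ j, ‖φ i (T j (x i))‖ := by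
        gcongr with i
        rw [_root_.sum_apply, map_sum]
        exact norm_sum_le _ _
    _ = ∑ j, ∑ i, ‖φ i (T j (x i))‖ := Finset.sum_comm
    _ ≤ ∑ j, C j * (∑ i, ‖x i‖ ^ p) ^ (1 / p) * weakNorm q φ := by
        gcongr with j
        exact hT j m x φ
    _ = (∑ j, C j) * (∑ i, ‖x i‖ ^ p) ^ (1 / p) * weakNorm q φ := by
        simp_rw [Finset.sum_mul]

lemma smulRight (hpq : p.HolderConjugate q) (c : E →L[𝕜] 𝕜) (b : F) :
    CohenStronglySummingWith p q (‖c‖ * ‖b‖) (c.smulRight b) := fun m x φ ↦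
  calc ∑ i, ‖φ i (c.smulRight b (x i))‖
      ≤ ∑ i, ‖c‖ * (‖x i‖ * ‖φ i b‖) := by
        gcongr with i
        rw [ContinuousLinearMap.smulRight_apply, map_smul, norm_smul, ← mul_assoc]
        gcongr
        exact c.le_opNorm _
    _ = ‖c‖ * ∑ i, ‖x i‖ * ‖φ i b‖ := by rw [Finset.mul_sum]
    _ ≤ ‖c‖ * ((∑ i, ‖x i‖ ^ p) ^ (1 / p) * (∑ i, ‖φ i b‖ ^ q) ^ (1 / q)) := by
        gcongr
        exact Real.inner_le_Lp_mul_Lq_of_nonneg _ hpq (fun _ _ ↦ norm_nonneg _)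
          fun _ _ ↦ norm_nonneg _
    _ ≤ ‖c‖ * ((∑ i, ‖x i‖ ^ p) ^ (1 / p) * (weakNorm q φ * ‖b‖)) := by
        gcongr
        exact le_weakNorm_mul_norm hpq.symm.pos φ b
    _ = ‖c‖ * ‖b‖ * (∑ i, ‖x i‖ ^ p) ^ (1 / p) * weakNorm q φ := by ring

lemma exists_of_finiteDimensional [FiniteDimensional 𝕜 F] (hpq : p.HolderConjugate q)
    (T : E →L[𝕜] F) : ∃ C > 0, CohenStronglySummingWith p q C T := by
  let b := finBasis 𝕜 F
  let c j : E →L[𝕜] 𝕜 := (b.coord j).toContinuousLinearMap ∘L T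
  have hT : T = ∑ j, (c j).smulRight (b j) := by
    ext x
    simp [c, b.sum_repr]
  refine ⟨(∑ j, ‖c j‖ * ‖b j‖) + 1, by positivity, ?_⟩
  rw [hT]
  exact (sum fun j ↦ smulRight hpq (c j) (b j)).mono (by simp)

lemma sum_mul_norm_comp_le {T : E →L[𝕜] F} (hp : 0 < p) (hC : 0 ≤ C)
    (hT : CohenStronglySummingWith p q C T)
    {m : ℕ} (φ : Fin m → F →L[𝕜] 𝕜) {a : Fin m → ℝ} (ha : ∀ i, 0 ≤ a i) :
    ∑ i, a i * ‖φ i ∘L T‖ ≤ C * (∑ i, a i ^ p) ^ (1 / p) * weakNorm q φ := by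
  have hR : 0 ≤ C * (∑ i, a i ^ p) ^ (1 / p) * weakNorm q φ :=
    mul_nonneg (mul_nonneg hC (Real.rpow_nonneg (Finset.sum_nonneg fun i _ ↦
      Real.rpow_nonneg (ha i) p) _)) (weakNorm_nonneg q φ)
  have key (t : ℝ) (ht : t < 1) :
      t * ∑ i, a i * ‖φ i ∘L T‖ ≤ C * (∑ i, a i ^ p) ^ (1 / p) * weakNorm q φ := by
    choose z hz hφz using fun i ↦ exists_norm_le_one_mul_opNorm_le (φ i ∘L T) ht
    have hnorm (i : Fin m) : ‖(a i : 𝕜) • z i‖ ≤ a i := by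
      simpa [norm_smul, abs_of_nonneg (ha i)] using mul_le_of_le_one_right (ha i) (hz i)
    calc t * ∑ i, a i * ‖φ i ∘L T‖
        = ∑ i, a i * (t * ‖φ i ∘L T‖) := by
          rw [Finset.mul_sum]
          exact Finset.sum_congr rfl fun i _ ↦ mul_left_comm ..
      _ ≤ ∑ i, a i * ‖φ i (T (z i))‖ := by
          gcongr with i
          · exact ha i
          · exact hφz i
      _ = ∑ i, ‖φ i (T ((a i : 𝕜) • z i))‖ := by
          simp [abs_of_nonneg (ha _)]
      _ ≤ C * (∑ i, ‖(a i : 𝕜) • z i‖ ^ p) ^ (1 / p) * weakNorm q φ := hT m _ φ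
      _ ≤ C * (∑ i, a i ^ p) ^ (1 / p) * weakNorm q φ := by
          have := weakNorm_nonneg q φ
          gcongr with i
          exact hnorm i
  simpa using mul_le_of_forall_lt_of_nonneg zero_le_one hR fun t ht₀ ht s _ hs ↦
    (mul_le_mul_of_nonneg_left hs.le ht₀).trans (key t ht)

lemma lp_norm_comp_le (hpq : p.HolderConjugate q) (hC : 0 ≤ C) {T : E →L[𝕜] F}
    (hT : CohenStronglySummingWith p q C T) {m : ℕ} (φ : Fin m → F →L[𝕜] 𝕜) :
    (∑ i, ‖φ i ∘L T‖ ^ q) ^ (1 / q) ≤ C * weakNorm q φ := by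
  obtain ⟨g, hg, hgφ⟩ := (NNReal.isGreatest_Lp Finset.univ (‖φ · ∘L T‖₊) hpq.symm).1
  have hg' : (∑ i, (g i : ℝ) ^ p) ^ (1 / p) ≤ 1 :=
    Real.rpow_le_one (by positivity) (mod_cast hg) hpq.one_div_nonneg
  calc (∑ i, ‖φ i ∘L T‖ ^ q) ^ (1 / q)
      = ∑ i, g i * ‖φ i ∘L T‖ := by
        simpa [mul_comm] using (congrArg NNReal.toReal hgφ).symm
    _ ≤ C * (∑ i, (g i : ℝ) ^ p) ^ (1 / p) * weakNorm q φ :=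
        hT.sum_mul_norm_comp_le hpq.pos hC φ fun i ↦ (g i).2
    _ ≤ C * 1 * weakNorm q φ := by
        have := weakNorm_nonneg q φ
        gcongr
    _ = C * weakNorm q φ := by rw [mul_one]

lemma restrictScalars_id [NormedSpace ℝ E] [IsScalarTower ℝ 𝕜 E] (hq : 1 ≤ q) (hC : 0 ≤ C)
    (h : CohenStronglySummingWith p q C (.id 𝕜 E)) :
    CohenStronglySummingWith p q (2 * C) (.id ℝ E) := fun m x (f : Fin m → StrongDual ℝ E) ↦
  calc ∑ i, ‖f i (x i)‖
      ≤ ∑ i, ‖(f i).extendRCLike (𝕜 := 𝕜) (x i)‖ := by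
        gcongr with i
        rw [← StrongDual.re_extendRCLike_apply (𝕜 := 𝕜) (f i)]
        exact RCLike.norm_re_le_norm _
    _ ≤ C * (∑ i, ‖x i‖ ^ p) ^ (1 / p) *
          weakNorm q fun i ↦ (f i).extendRCLike (𝕜 := 𝕜) := h m x _
    _ ≤ C * (∑ i, ‖x i‖ ^ p) ^ (1 / p) * (2 * weakNorm q f) := by
        gcongr
        exact weakNorm_extendRCLike_le hq f
    _ = 2 * C * (∑ i, ‖x i‖ ^ p) ^ (1 / p) * weakNorm q f := by ring

end CohenStronglySummingWith
end Cohen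

section Summing

variable {X V : Type*} [TopologicalSpace X] [NormedAddCommGroup V] [NormedSpace ℝ V]
  {J : V →ₗᵢ[ℝ] (X →ᵇ ℝ)} {q D K : ℝ}

/-- The space `V`, realised isometrically by `J` as bounded functions on `X`, has a `q`-summing
identity. The weak `q`-norm of a family is computed on the points of `X`, which norm `V`, and `D` is
the `q`-th power of the summing constant. -/
def PointwiseSummingWith (q D : ℝ) (J : V →ₗᵢ[ℝ] (X →ᵇ ℝ)) : Prop :=
  ∀ (m : ℕ) (v : Fin m → V) (M : ℝ), (∀ x, ∑ i, |J (v i) x| ^ q ≤ M) → ∑ i, ‖v i‖ ^ q ≤ D * M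

lemma exists_rpow_le_add_mul_sq {ε : ℝ} (hq : 0 < q) (hε : 0 < ε) :
    ∃ K > 0, ∀ t : ℝ, 0 ≤ t → t ≤ 1 → t ^ q ≤ ε + K * t ^ 2 := by
  refine ⟨((ε ^ q⁻¹) ^ 2)⁻¹, by positivity, fun t ht₀ ht₁ ↦ ?_⟩
  obtain ht | ht := le_total t (ε ^ q⁻¹)
  · calc t ^ q ≤ (ε ^ q⁻¹) ^ q := by gcongr
      _ = ε := Real.rpow_inv_rpow hε.le hq.ne'
      _ ≤ ε + ((ε ^ q⁻¹) ^ 2)⁻¹ * t ^ 2 := le_add_of_nonneg_right (by positivity)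
  · calc t ^ q ≤ 1 := Real.rpow_le_one ht₀ ht₁ hq.le
      _ = ((ε ^ q⁻¹) ^ 2)⁻¹ * (ε ^ q⁻¹) ^ 2 := (inv_mul_cancel₀ (by positivity)).symm
      _ ≤ ((ε ^ q⁻¹) ^ 2)⁻¹ * t ^ 2 := by gcongr
      _ ≤ ε + ((ε ^ q⁻¹) ^ 2)⁻¹ * t ^ 2 := le_add_of_nonneg_left hε.le

lemma exists_smul_rpow_le {ε : ℝ} (hq : 0 < q)
    (hK : ∀ t : ℝ, 0 ≤ t → t ≤ 1 → t ^ q ≤ ε + K * t ^ 2) (f : X →ᵇ ℝ) :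
    ∃ a : ℝ, ‖a • f‖ ^ q = ‖f‖ ^ 2 ∧ ∀ x, |(a • f) x| ^ q ≤ ε * ‖f‖ ^ 2 + K * f x ^ 2 := by
  obtain rfl | hf := eq_or_ne f 0
  · exact ⟨0, by simp [hq.ne'], by simp [hq.ne']⟩
  have hf' : 0 < ‖f‖ := norm_pos_iff.2 hf
  have hpow : (‖f‖ ^ (2 / q)) ^ q = ‖f‖ ^ 2 := by
    rw [← Real.rpow_mul hf'.le, div_mul_cancel₀ _ hq.ne', Real.rpow_two]
  refine ⟨‖f‖ ^ (2 / q) / ‖f‖, ?_, fun x ↦ ?_⟩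
  · rw [norm_smul, Real.norm_of_nonneg (by positivity), div_mul_cancel₀ _ hf'.ne', hpow]
  · have hfx : |f x| / ‖f‖ ≤ 1 := (div_le_one hf').2 (f.norm_coe_le_norm x)
    calc |((‖f‖ ^ (2 / q) / ‖f‖) • f) x| ^ q
        = (‖f‖ ^ (2 / q) * (|f x| / ‖f‖)) ^ q := by
          rw [BoundedContinuousFunction.smul_apply, smul_eq_mul, abs_mul,
            abs_of_nonneg (by positivity), div_mul_comm, mul_comm]
      _ = ‖f‖ ^ 2 * (|f x| / ‖f‖) ^ q := by
          rw [Real.mul_rpow (by positivity) (by positivity), hpow]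
      _ ≤ ‖f‖ ^ 2 * (ε + K * (|f x| / ‖f‖) ^ 2) := by
          gcongr
          exact hK _ (by positivity) hfx
      _ = ε * ‖f‖ ^ 2 + K * f x ^ 2 := by
          rw [← sq_abs (f x)]
          field_simp

lemma PointwiseSummingWith.exists_two (hJ : PointwiseSummingWith q D J) (hq : 0 < q) (hD : 0 < D) :
    ∃ K > 0, PointwiseSummingWith 2 K J := by
  obtain ⟨K, hK₀, hK⟩ := exists_rpow_le_add_mul_sq hq (ε := 1 / (2 * D)) (by positivity)
  refine ⟨2 * D * K, by positivity, fun m v M hM ↦ ?_⟩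
  simp only [Real.rpow_two, sq_abs] at hM ⊢
  choose a ha_norm ha_le using fun i ↦ exists_smul_rpow_le hq hK (J (v i))
  simp_rw [← map_smul, J.norm_map] at ha_norm ha_le
  have hsum : ∑ i, ‖v i‖ ^ 2 ≤ D * (1 / (2 * D) * ∑ i, ‖v i‖ ^ 2 + K * M) :=
    calc ∑ i, ‖v i‖ ^ 2 = ∑ i, ‖a i • v i‖ ^ q := by simp_rw [ha_norm]
      _ ≤ D * (1 / (2 * D) * ∑ i, ‖v i‖ ^ 2 + K * M) := hJ m _ _ fun x ↦
        calc ∑ i, |J (a i • v i) x| ^ q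
            ≤ ∑ i, (1 / (2 * D) * ‖v i‖ ^ 2 + K * J (v i) x ^ 2) := by
              gcongr with i
              exact ha_le i x
          _ = 1 / (2 * D) * ∑ i, ‖v i‖ ^ 2 + K * ∑ i, J (v i) x ^ 2 := by
              rw [Finset.sum_add_distrib, Finset.mul_sum, Finset.mul_sum]
          _ ≤ 1 / (2 * D) * ∑ i, ‖v i‖ ^ 2 + K * M := by
              gcongr
              exact hM x
  have hhalf : D * (1 / (2 * D) * ∑ i, ‖v i‖ ^ 2 + K * M)
      = (∑ i, ‖v i‖ ^ 2) / 2 + D * K * M := by field_simp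
  linarith

lemma mem_interior_nonneg {f : X →ᵇ ℝ} :
    f ∈ interior {g : X →ᵇ ℝ | ∀ x, 0 ≤ g x} ↔ ∃ ε > 0, ∀ x, ε ≤ f x := by
  rw [mem_interior_iff_mem_nhds, Metric.mem_nhds_iff]
  constructor
  · rintro ⟨ε, hε, hf⟩
    refine ⟨ε / 2, by positivity, fun x ↦ ?_⟩
    have hmem : f - const X (ε / 2) ∈ ball f ε := by
      rw [mem_ball, dist_eq_norm, sub_sub_cancel_left, norm_neg]
      exact (norm_const_le _).trans_lt (by rw [Real.norm_of_nonneg] <;> linarith)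
    simpa using hf hmem x
  · rintro ⟨ε, hε, hf⟩
    refine ⟨ε, hε, fun g hg x ↦ ?_⟩
    have hgf : |g x - f x| < ε := (dist_coe_le_dist x).trans_lt hg
    linarith [hf x, (abs_lt.1 hgf).1]

lemma convex_nonneg : Convex ℝ {f : X →ᵇ ℝ | ∀ x, 0 ≤ f x} :=
  fun _ hf _ hg _ _ ha hb _ x ↦ add_nonneg (mul_nonneg ha (hf x)) (mul_nonneg hb (hg x))

lemma nonpos_of_lt_on_interior_nonneg {F : (X →ᵇ ℝ) →ₗ[ℝ] ℝ} {u : ℝ}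
    (hF : ∀ f ∈ interior {f : X →ᵇ ℝ | ∀ x, 0 ≤ f x}, F f < u) :
    0 ≤ u ∧ ∀ f, 0 ≤ f → F f ≤ 0 := by
  have hF_add {f : X →ᵇ ℝ} (hf : 0 ≤ f) {ε : ℝ} (hε : 0 < ε) : F f + ε * F 1 < u := by
    simpa using hF (f + ε • 1) (mem_interior_nonneg.2 ⟨ε, hε, by simpa using fun x ↦ hf x⟩)
  constructor
  · by_contra! hu
    have hF₁ : F 1 < 0 := by simpa using (hF_add le_rfl one_pos).trans hu
    have := hF_add le_rfl (div_pos_of_neg_of_neg hu hF₁)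
    rw [map_zero, zero_add, div_mul_cancel₀ _ hF₁.ne] at this
    exact lt_irrefl u this
  · intro f hf
    by_contra! hFf
    have ht : 0 ≤ |u - F 1| / F f := by positivity
    have := hF_add (f := (|u - F 1| / F f) • f) (fun x ↦ mul_nonneg ht (hf x)) one_pos
    rw [map_smul, smul_eq_mul, div_mul_cancel₀ _ hFf.ne'] at this
    linarith [le_abs_self (u - F 1)]

lemma exists_mean_nonpos {A : Set (X →ᵇ ℝ)} (hA : Convex ℝ A) (hne : A.Nonempty)
    (h : ∀ a ∈ A, ∀ ε > 0, ∃ x, a x < ε) :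
    ∃ μ : (X →ᵇ ℝ) →ₚ[ℝ] ℝ, μ 1 = 1 ∧ ∀ a ∈ A, μ a ≤ 0 := by
  have hdisj : Disjoint (interior {f : X →ᵇ ℝ | ∀ x, 0 ≤ f x}) A := by
    refine Set.disjoint_left.2 fun a ha haA ↦ ?_
    obtain ⟨ε, hε, hεa⟩ := mem_interior_nonneg.1 ha
    obtain ⟨x, hx⟩ := h a haA ε hε
    exact (hεa x).not_gt hx
  obtain ⟨F, u, hFpos, hFA⟩ :=
    geometric_hahn_banach_open convex_nonneg.interior isOpen_interior hA hdisj
  obtain ⟨hu, hF⟩ := nonpos_of_lt_on_interior_nonneg (F := F.toLinearMap) hFpos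
  have hF₁ : F 1 < 0 := by
    obtain ⟨a, ha⟩ := hne
    have hmem : a + (‖a‖ + 1) • 1 ∈ interior {f : X →ᵇ ℝ | ∀ x, 0 ≤ f x} :=
      mem_interior_nonneg.2 ⟨1, one_pos, fun x ↦ by
        simpa using show 1 ≤ a x + (‖a‖ + 1) by linarith [a.neg_norm_le_apply x]⟩
    have := (hFpos _ hmem).trans_le (hFA a ha)
    rw [map_add, map_smul, smul_eq_mul] at this
    exact neg_of_mul_neg_right (by linarith) (by positivity : 0 ≤ ‖a‖ + 1)
  have hinv : (F 1)⁻¹ ≤ 0 := inv_nonpos.2 hF₁.le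
  exact ⟨.mk₀ ((F 1)⁻¹ • F.toLinearMap) fun f hf ↦ mul_nonneg_of_nonpos_of_nonpos hinv (hF f hf),
    inv_mul_cancel₀ hF₁.ne, fun a ha ↦ mul_nonpos_of_nonpos_of_nonneg hinv (hu.trans (hFA a ha))⟩

lemma convex_setOf_sum_of_sq_homogeneous {V W : Type*} [AddCommGroup V] [Module ℝ V]
    [AddCommGroup W] [Module ℝ W] {Q : V → W} (hQ : ∀ (c : ℝ) v, Q (c • v) = c ^ 2 • Q v) :
    Convex ℝ {w | ∃ (n : ℕ) (v : Fin n → V), w = ∑ i, Q (v i)} := by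
  rintro _ ⟨n, v, rfl⟩ _ ⟨n', v', rfl⟩ a b ha hb -
  refine ⟨n + n', Fin.append (fun i ↦ √a • v i) fun i ↦ √b • v' i, ?_⟩
  simp [Fin.sum_univ_add, hQ, Real.sq_sqrt, ha, hb, Finset.smul_sum]

lemma PointwiseSummingWith.exists_mean (hJ : PointwiseSummingWith 2 K J) (hK : 0 < K) :
    ∃ μ : (X →ᵇ ℝ) →ₚ[ℝ] ℝ, μ 1 = 1 ∧ ∀ v, ‖v‖ ^ 2 ≤ K * μ (J v * J v) := by
  let Q (v : V) : X →ᵇ ℝ := ‖v‖ ^ 2 • 1 - K • (J v * J v)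
  have hQ (c : ℝ) (v : V) : Q (c • v) = c ^ 2 • Q v := by
    ext x
    simp only [Q, norm_smul, mul_pow, map_smul, Real.norm_eq_abs, sq_abs, coe_sub, coe_smul,
      coe_one, coe_mul, Pi.sub_apply, Pi.mul_apply, Pi.one_apply, smul_eq_mul]
    ring
  have hQ_sum (n : ℕ) (v : Fin n → V) (x : X) :
      (∑ i, Q (v i)) x = ∑ i, ‖v i‖ ^ 2 - K * ∑ i, |J (v i) x| ^ (2 : ℝ) := by
    simp [Q, Finset.mul_sum, ← pow_two]
  obtain ⟨μ, hμ₁, hμ⟩ := exists_mean_nonpos (convex_setOf_sum_of_sq_homogeneous hQ)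
    ⟨0, 0, Fin.elim0, by simp⟩ <| by
      rintro _ ⟨n, v, rfl⟩ ε hε
      by_contra! hle
      have hM (x : X) : ∑ i, |J (v i) x| ^ (2 : ℝ) ≤ (∑ i, ‖v i‖ ^ 2 - ε) / K := by
        rw [le_div_iff₀ hK]
        linarith [hle x, hQ_sum n v x]
      have := hJ n v _ hM
      rw [mul_div_cancel₀ _ hK.ne'] at this
      simp only [Real.rpow_two] at this
      linarith
  refine ⟨μ, hμ₁, fun v ↦ ?_⟩
  have := hμ (Q v) ⟨1, fun _ ↦ v, by simp⟩
  simpa [Q, hμ₁] using this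

lemma exists_orthonormal_basis {V : Type*} [AddCommGroup V] [Module ℝ V] [FiniteDimensional ℝ V]
    (B : LinearMap.BilinForm ℝ V) (hB : B.IsSymm) (hpos : ∀ v ≠ 0, 0 < B v v) :
    ∃ b : Basis (Fin (finrank ℝ V)) ℝ V, ∀ i j, B (b i) (b j) = if i = j then 1 else 0 := by
  let c : InnerProductSpace.Core ℝ V :=
    { inner v w := B v w
      conj_inner_symm v w := hB.eq w v
      re_inner_nonneg v := by
        obtain rfl | hv := eq_or_ne v 0
        · simp
        · exact (hpos v hv).le
      add_left := by simp
      smul_left := by simp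
      definite v := by
        contrapose!
        exact fun hv ↦ (hpos v hv).ne' }
  let := c.toNormedAddCommGroup
  let : InnerProductSpace ℝ V := .ofCore c.toCore
  let b := stdOrthonormalBasis ℝ V
  exact ⟨b.toBasis, fun i j ↦ by
    rw [b.coe_toBasis]
    exact orthonormal_iff_ite.1 b.orthonormal i j⟩

lemma sum_sq_le_of_orthonormal {V ι : Type*} [AddCommGroup V] [Module ℝ V] [Fintype ι]
    [DecidableEq ι] {B : LinearMap.BilinForm ℝ V} {v : ι → V}
    (hv : ∀ i j, B (v i) (v j) = if i = j then 1 else 0) (hK : 0 ≤ K) (l : V →ₗ[ℝ] ℝ)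
    (hl : ∀ w, l w ^ 2 ≤ K * B w w) : ∑ i, l (v i) ^ 2 ≤ K := by
  have hT := hl (∑ i, l (v i) • v i)
  have hB : B (∑ i, l (v i) • v i) (∑ i, l (v i) • v i) = ∑ i, l (v i) ^ 2 := by
    simp [hv, pow_two]
  have hl' : l (∑ i, l (v i) • v i) = ∑ i, l (v i) ^ 2 := by simp [pow_two]
  rw [hB, hl'] at hT
  obtain h₀ | h₀ := (Finset.sum_nonneg fun i _ ↦ sq_nonneg (l (v i)) :
    0 ≤ ∑ i, l (v i) ^ 2).eq_or_lt
  · exact h₀ ▸ hK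
  · exact le_of_mul_le_mul_right (by rwa [← pow_two]) h₀

lemma finrank_le_of_norm_sq_le_mean [FiniteDimensional ℝ V] {μ : (X →ᵇ ℝ) →ₚ[ℝ] ℝ} (hμ₁ : μ 1 = 1)
    (hK : 0 ≤ K) (hJ : ∀ v, ‖v‖ ^ 2 ≤ K * μ (J v * J v)) : finrank ℝ V ≤ K := by
  let B : LinearMap.BilinForm ℝ V :=
    ((LinearMap.mul ℝ (X →ᵇ ℝ)).compr₂ μ.toLinearMap).compl₁₂ J.toLinearMap J.toLinearMap
  have hB : B.IsSymm := ⟨fun v w ↦ congrArg μ (mul_comm (J v) (J w))⟩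
  have hBpos (v : V) (hv : v ≠ 0) : 0 < B v v :=
    pos_of_mul_pos_right ((pow_pos (norm_pos_iff.2 hv) 2).trans_le (hJ v)) hK
  obtain ⟨b, hb⟩ := exists_orthonormal_basis B hB hBpos
  have hle : ∑ i, J (b i) * J (b i) ≤ K • 1 := fun x ↦ by
    let evalx : V →ₗ[ℝ] ℝ := (evalCLM ℝ x).toLinearMap ∘ₗ J.toLinearMap
    have heval (v : V) : evalx v ^ 2 ≤ K * B v v := by
      refine le_trans ?_ (hJ v)
      rw [← J.norm_map]
      exact sq_le_sq' (neg_norm_le_apply _ x) (apply_le_norm _ x)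
    simpa [evalx, pow_two] using sum_sq_le_of_orthonormal hb hK evalx heval
  calc (finrank ℝ V : ℝ) = ∑ i, B (b i) (b i) := by simp [hb]
    _ = μ (∑ i, J (b i) * J (b i)) := (map_sum μ _ _).symm
    _ ≤ μ (K • 1) := OrderHomClass.mono μ hle
    _ = K := by simp [hμ₁]

lemma finiteDimensional_of_norm_sq_le_mean {μ : (X →ᵇ ℝ) →ₚ[ℝ] ℝ} (hμ₁ : μ 1 = 1)
    (hK : 0 ≤ K) (hJ : ∀ v, ‖v‖ ^ 2 ≤ K * μ (J v * J v)) : FiniteDimensional ℝ V := by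
  refine rank_lt_aleph0_iff.1 <| (rank_le (n := ⌊K⌋₊) fun s hs ↦ ?_).trans_lt
    Cardinal.natCast_lt_aleph0
  rw [← finrank_span_finset_eq_card hs]
  exact Nat.le_floor <| finrank_le_of_norm_sq_le_mean hμ₁ hK
    (J := J.comp (Submodule.span ℝ (s : Set V)).subtypeₗᵢ) fun v ↦ hJ v

theorem PointwiseSummingWith.finiteDimensional (hJ : PointwiseSummingWith q D J) (hq : 0 < q)
    (hD : 0 < D) : FiniteDimensional ℝ V := by
  obtain ⟨K, hK, hJK⟩ := hJ.exists_two hq hD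
  obtain ⟨μ, hμ₁, hμ⟩ := hJK.exists_mean hK
  exact finiteDimensional_of_norm_sq_le_mean hμ₁ hK.le hμ

end Summing

section DvoretzkyRogers

variable {𝕜 E : Type*} [RCLike 𝕜] [NormedAddCommGroup E] {p q C : ℝ}

/-- The isometric embedding of the dual of `E` into the bounded continuous functions on the closed
unit ball of `E`, which turns weak norms of functionals into suprema of sums of functions. -/
noncomputable def restrictUnitBall [NormedSpace ℝ E] :
    StrongDual ℝ E →ₗᵢ[ℝ] (closedBall (0 : E) 1 →ᵇ ℝ) where
  toFun f := .ofNormedAddCommGroup (fun y ↦ f y) (by fun_prop) ‖f‖ fun y ↦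
    f.unit_le_opNorm y (mem_closedBall_zero_iff.1 y.2)
  map_add' _ _ := rfl
  map_smul' _ _ := rfl
  norm_map' f := by
    have hle (y : closedBall (0 : E) 1) : ‖f y‖ ≤ ‖f‖ :=
      f.unit_le_opNorm y (mem_closedBall_zero_iff.1 y.2)
    refine le_antisymm ((norm_le (norm_nonneg f)).2 hle)
      (f.opNorm_le_of_unit_norm (norm_nonneg _) fun y hy ↦ ?_)
    exact (ofNormedAddCommGroup (fun y : closedBall (0 : E) 1 ↦ f y) (by fun_prop) ‖f‖
      hle).norm_coe_le_norm ⟨y, mem_closedBall_zero_iff.2 hy.le⟩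

lemma CohenStronglySummingWith.pointwiseSummingWith [NormedSpace ℝ E] (hpq : p.HolderConjugate q)
    (hC : 0 ≤ C) (h : CohenStronglySummingWith p q C (.id ℝ E)) :
    PointwiseSummingWith q (C ^ q) (restrictUnitBall (E := E)) := fun m f M hM ↦ by
  have hM₀ : 0 ≤ M := le_trans (by positivity) (hM ⟨0, by simp⟩)
  have hq : 0 < q := hpq.symm.pos
  have hweak : weakNorm q f ≤ M ^ (1 / q) := weakNorm_le fun y ↦ by
    gcongr
    exact hM y
  have hsum : (∑ i, ‖f i‖ ^ q) ^ (1 / q) ≤ C * M ^ (1 / q) :=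
    (h.lp_norm_comp_le hpq hC f).trans (by gcongr)
  calc ∑ i, ‖f i‖ ^ q = ((∑ i, ‖f i‖ ^ q) ^ (1 / q)) ^ q := by
        rw [one_div, Real.rpow_inv_rpow (by positivity) hq.ne']
    _ ≤ (C * M ^ (1 / q)) ^ q := by gcongr
    _ = C ^ q * M := by
        rw [Real.mul_rpow hC (by positivity), one_div, Real.rpow_inv_rpow hM₀ hq.ne']

lemma finiteDimensional_of_strongDual [NormedSpace 𝕜 E] [FiniteDimensional 𝕜 (StrongDual 𝕜 E)] :
    FiniteDimensional 𝕜 E :=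
  .of_injective (V₂ := StrongDual 𝕜 (StrongDual 𝕜 E))
    (NormedSpace.inclusionInDoubleDualLi (E := E) 𝕜).toLinearMap
    (NormedSpace.inclusionInDoubleDualLi (E := E) 𝕜).injective

theorem CohenStronglySummingWith.finiteDimensional [NormedSpace 𝕜 E] (hpq : p.HolderConjugate q)
    (hC : 0 < C) (h : CohenStronglySummingWith p q C (.id 𝕜 E)) : FiniteDimensional 𝕜 E := by
  let : NormedSpace ℝ E := .restrictScalars ℝ 𝕜 E
  have : IsScalarTower ℝ 𝕜 E := .of_algebraMap_smul fun _ _ ↦ rfl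
  have hdual := (h.restrictScalars_id hpq.symm.lt.le hC.le).pointwiseSummingWith hpq (by positivity)
  have : FiniteDimensional ℝ (StrongDual ℝ E) :=
    hdual.finiteDimensional hpq.symm.pos (by positivity)
  have : FiniteDimensional ℝ E := finiteDimensional_of_strongDual
  exact Module.Finite.of_restrictScalars_finite ℝ 𝕜 E

end DvoretzkyRogers

theorem stmt10_general {𝕜 E : Type*} [RCLike 𝕜] [NormedAddCommGroup E] [NormedSpace 𝕜 E]
    (p q : ℝ) (hp : 1 < p) (hq : 1 / p + 1 / q = 1) :
    (∃ C > 0, ∀ (m : ℕ) (x : Fin m → E) (φ : Fin m → E →L[𝕜] 𝕜),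
        ∑ i, ‖φ i (x i)‖ ≤ C * (∑ i, ‖x i‖ ^ p) ^ (1 / p) * weakNorm q φ)
    ↔ FiniteDimensional 𝕜 E := by
  have hpq : p.HolderConjugate q := Real.holderConjugate_iff.2 ⟨hp, by simpa using hq⟩
  constructor
  · rintro ⟨C, hC, h⟩
    exact CohenStronglySummingWith.finiteDimensional hpq hC h
  · intro _
    exact CohenStronglySummingWith.exists_of_finiteDimensional hpq (.id 𝕜 E)

/-- Dvoretzky–Rogers-type theorem for Cohen strongly `p`-summing operators: the identity
operator of a Banach space `E` is Cohen strongly `p`-summing iff `E` is finite-dimensional. -/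
theorem stmt10 {𝕜 E : Type*} [RCLike 𝕜]
    [NormedAddCommGroup E] [NormedSpace 𝕜 E] [CompleteSpace E]
    (p q : ℝ) (hp : 1 < p) (hq : 1 / p + 1 / q = 1) :
    (∃ C > 0, ∀ (m : ℕ) (x : Fin m → E) (φ : Fin m → E →L[𝕜] 𝕜),
        ∑ i, ‖φ i (x i)‖ ≤ C * (∑ i, ‖x i‖ ^ p) ^ (1 / p) * weakNorm q φ)
    ↔ FiniteDimensional 𝕜 E :=
  stmt10_general p q hp hq
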